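/- arXiv:1704.06919 — 5 statements merged into one kernel-verified Lean document; each statement's English description precedes it below -/
import Mathlib

section
/- If x* ∈ F is a local minimizer of f over F, then for every d ∈ ℝ^n such that x* + d ∈ F, ⟪u_i, d⟫ = 0 for all i ∈ C(x*), and ‖d‖ ≤ 1, one has ⟨∇f_{W(x*)}(x*), d⟩ ≥ 0 (equivalently, the criticality measure χ_f(x*) = |min{⟨∇f_{W(x*)}(x*), d⟩ : x*+d ∈ F, d ∈ R(x*), ‖d‖ ≤ 1}| equals 0). -/
/-!
Call an index `i : ιH` active if `⟪u i, xstar⟫ = 0`, and let `f_W` be the objective without its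
active terms. On the convex set `K = F ∩ {y | ⟪u i, y⟫ = 0 for every active i}` the active terms
`|⟪u i, y⟫| ^ q` vanish, since `0 < q`, so the objective coincides with `f_W` there. Hence `xstar`
is a local minimizer of `f_W` over `K`. For an admissible `d` the segment from `xstar` to
`xstar + d` lies in `K`, so `d` is a tangent direction, and the first-order necessary condition
for `f_W`, which is differentiable at `xstar`, gives the claim.
-/

open RealInnerProductSpace Finset

/-- Away from the hyperplane `⟪v, x⟫ = 0`, the non-Lipschitz term `|⟪v, ·⟫| ^ q` is
differentiable, as both `|·|` and `· ^ q` are smooth away from `0`. -/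
lemma differentiableAt_abs_inner_rpow {E : Type*} [NormedAddCommGroup E] [InnerProductSpace ℝ E]
    (v x : E) (q : ℝ) (h : 0 < |⟪v, x⟫|) :
    DifferentiableAt ℝ (fun y : E => |⟪v, y⟫| ^ q) x := by
  have h_inner : DifferentiableAt ℝ (fun y : E => ⟪v, y⟫) x :=
    (innerSL ℝ v).differentiableAt
  exact (h_inner.abs (abs_pos.mp h)).rpow_const (Or.inl h.ne')

theorem stmt_0
    (n : ℕ) (hn : 1 ≤ n)
    {ιN ιH : Type*} [Fintype ιN] [Fintype ιH]
    (nN : ιN → ℕ)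
    (U : ∀ i : ιN, EuclideanSpace ℝ (Fin n) →L[ℝ] EuclideanSpace ℝ (Fin (nN i)))
    (f : ∀ i : ιN, EuclideanSpace ℝ (Fin (nN i)) → ℝ)
    (hf : ∀ i : ιN, ContDiff ℝ 1 (f i))
    (u : ιH → EuclideanSpace ℝ (Fin n))
    (q : ℝ) (hq : q ∈ Set.Ioo (0:ℝ) 1)
    (F : Set (EuclideanSpace ℝ (Fin n)))
    (hFne : F.Nonempty) (hFcl : IsClosed F) (hFcv : Convex ℝ F)
    (xstar : EuclideanSpace ℝ (Fin n)) (hxF : xstar ∈ F)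
    (hmin : IsLocalMinOn
      (fun x => (∑ i : ιN, f i (U i x)) + ∑ i : ιH, |⟪u i, x⟫| ^ q) F xstar) :
    ∀ d : EuclideanSpace ℝ (Fin n),
      xstar + d ∈ F →
      (∀ i : ιH, |⟪u i, xstar⟫| ≤ 0 → ⟪u i, d⟫ = 0) →
      ‖d‖ ≤ 1 →
      0 ≤ ⟪gradient (fun y => (∑ i : ιN, f i (U i y)) +
            ∑ i ∈ Finset.univ.filter (fun i : ιH => 0 < |⟪u i, xstar⟫|),
              |⟪u i, y⟫| ^ q) xstar, d⟫ := by
  intro d hd hdC _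
  set g : EuclideanSpace ℝ (Fin n) → ℝ := fun y => (∑ i : ιN, f i (U i y)) +
    ∑ i ∈ Finset.univ.filter (fun i : ιH => 0 < |⟪u i, xstar⟫|), |⟪u i, y⟫| ^ q with hg
  have hdiff : DifferentiableAt ℝ g xstar := by
    refine DifferentiableAt.add ?_ ?_
    · refine DifferentiableAt.fun_sum fun i _ => ?_
      exact ((hf i).differentiable one_ne_zero (U i xstar)).comp xstar (U i).differentiableAt
    · refine DifferentiableAt.fun_sum fun i hi => ?_
      exact differentiableAt_abs_inner_rpow _ _ _ (Finset.mem_filter.mp hi).2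
  set K : Set (EuclideanSpace ℝ (Fin n)) :=
    F ∩ {y | ∀ i : ιH, |⟪u i, xstar⟫| ≤ 0 → ⟪u i, y⟫ = 0} with hK
  have hfg : ∀ y ∈ K, (∑ i : ιN, f i (U i y)) + ∑ i : ιH, |⟪u i, y⟫| ^ q = g y := by
    intro y hy
    rw [hg]
    congr 1
    symm
    refine Finset.sum_subset (Finset.filter_subset _ _) fun i _ hi => ?_
    have hi0 : |⟪u i, xstar⟫| ≤ 0 := by simpa using hi
    rw [hy.2 i hi0, abs_zero, Real.zero_rpow hq.1.ne']
  have hxK : xstar ∈ K := ⟨hxF, fun i hi => abs_nonpos_iff.mp hi⟩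
  have hming : IsLocalMinOn g K xstar := by
    filter_upwards [hmin.on_subset Set.inter_subset_left, self_mem_nhdsWithin] with y hy hyK
    rwa [← hfg y hyK, ← hfg xstar hxK]
  have hseg : segment ℝ xstar (xstar + d) ⊆ K := by
    intro y hy
    refine ⟨hFcv.segment_subset hxF hd hy, fun i hi => ?_⟩
    obtain ⟨t, _, rfl⟩ := (segment_eq_image' ℝ xstar (xstar + d)) ▸ hy
    simp [inner_add_right, inner_smul_right, hdC i hi, abs_nonpos_iff.mp hi]
  have hgrad : HasFDerivWithinAt g (InnerProductSpace.toDual ℝ _ (gradient g xstar)) K xstar :=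
    hdiff.hasGradientAt.hasFDerivAt.hasFDerivWithinAt
  simpa using hming.hasFDerivWithinAt_nonneg hgrad (mem_posTangentConeAt_of_segment_subset hseg)
end

section
/- Let q ∈ (0,1), let p ≥ 1 be an integer, let φ > 0, and let x, s ∈ ℝ with |x| ≥ φ and |x+s| ≥ φ. Set L_H(φ) = (Π_{ℓ=0}^{p} |q−ℓ|) · φ^{q−p−1}. Then the two-sided Taylor model satisfies the error bounds | |x+s|^q − m_p(x,s) | ≤ (L_H(φ)/p!) |s|^{p+1} and | q |x+s|^{q−1} sgn(x+s) − D_p(x,s) | ≤ L_H(φ) |s|^p, where q|x+s|^{q−1}sgn(x+s) is the derivative of t ↦ |t|^q at t = x+s. -/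
/-!
Write `a = |x|` and `b = |x + s|`.  In all four sign cases `mu x s = b - a`, so that `mmodel` is the
one-sided Taylor polynomial of `t ↦ t ^ q` centred at `a` and evaluated at `b`, and `Dmodel` is, up
to the sign of `x + s`, `q` times the Taylor polynomial of degree `p - 1` of `t ↦ t ^ (q - 1)`.
Moreover `|b - a| ≤ |s|`, by the reverse triangle inequality.

Both bounds are therefore instances of one remainder estimate for real powers on `[φ, ∞)`
(`abs_rpow_sub_powTaylor_le`).  It comes from regarding the Taylor polynomial as a function of its
centre: the derivative telescopes to its last term (`hasDerivAt_powTaylor`), and the mean value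
inequality between `a` and `b` gives the bound, whichever of `a`, `b` is larger.
-/

/-- `μ(x,s)` from the paper, for `x ≠ 0` and `x + s ≠ 0`. -/
noncomputable def mu (x s : ℝ) : ℝ :=
  if 0 < x then (if 0 < x + s then s else -(2 * x + s))
  else (if 0 < x + s then 2 * x + s else -s)

/-- `π_j(q) = ∏_{ℓ=1}^{j-1} (q - ℓ)`, with the empty product `π_1(q) = 1`. -/
noncomputable def piq (q : ℝ) (j : ℕ) : ℝ :=
  ∏ ℓ ∈ Finset.Icc 1 (j - 1), (q - (ℓ : ℝ))

/-- Two-sided Taylor model `m_p(x,s)` of `|·|^q` of order `p` at `x` with step `s`. -/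
noncomputable def mmodel (q : ℝ) (p : ℕ) (x s : ℝ) : ℝ :=
  |x| ^ q + q * ∑ j ∈ Finset.Icc 1 p,
    (piq q j / Nat.factorial j) * |x| ^ (q - (j : ℝ)) * mu x s ^ j

/-- Derivative `D_p(x,s)` of the two-sided Taylor model with respect to `s`. -/
noncomputable def Dmodel (q : ℝ) (p : ℕ) (x s : ℝ) : ℝ :=
  Real.sign (x + s) * (q * ∑ j ∈ Finset.Icc 1 p,
    (piq q j / Nat.factorial (j - 1)) * |x| ^ (q - (j : ℝ)) * mu x s ^ (j - 1))

/-- The Taylor polynomial of degree `n` of `t ↦ t ^ r` with centre `a`, evaluated at `b`. -/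
noncomputable def powTaylor (r : ℝ) (n : ℕ) (b a : ℝ) : ℝ :=
  ∑ k ∈ Finset.range (n + 1),
    (∏ l ∈ Finset.range k, (r - (l : ℝ))) / (k.factorial : ℝ) * a ^ (r - (k : ℝ)) * (b - a) ^ k

/-- The derivative of the Taylor polynomial with respect to its centre telescopes. -/
lemma hasDerivAt_powTaylor (r : ℝ) (n : ℕ) (b a : ℝ) (ha : 0 < a) :
    HasDerivAt (powTaylor r n b)
      ((∏ l ∈ Finset.range (n + 1), (r - (l : ℝ))) / (n.factorial : ℝ)
        * a ^ (r - ((n : ℝ) + 1)) * (b - a) ^ n) a := by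
  induction n with
  | zero =>
    have h := Real.hasDerivAt_rpow_const (x := a) (p := r) (Or.inl ha.ne')
    have h2 : powTaylor r 0 b = fun t => t ^ r := by
      funext t; simp [powTaylor]
    rw [h2]
    simpa using h
  | succ n ih =>
    have h2 : powTaylor r (n + 1) b = fun t => powTaylor r n b t +
        (∏ l ∈ Finset.range (n + 1), (r - (l : ℝ))) / ((n + 1).factorial : ℝ)
          * t ^ (r - ((n + 1 : ℕ) : ℝ)) * (b - t) ^ (n + 1) := by
      funext t; simp only [powTaylor]; rw [Finset.sum_range_succ]
    rw [h2]
    have h3 := Real.hasDerivAt_rpow_const (x := a) (p := r - ((n + 1 : ℕ) : ℝ)) (Or.inl ha.ne')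
    have h4 := ((hasDerivAt_id a).const_sub b).pow (n + 1)
    have h5 := ih.add ((h3.const_mul
      ((∏ l ∈ Finset.range (n + 1), (r - (l : ℝ))) / ((n + 1).factorial : ℝ))).mul h4)
    refine h5.congr_deriv ?_
    rw [Finset.prod_range_succ _ (n + 1), Nat.factorial_succ]
    have hn : (n.factorial : ℝ) ≠ 0 := by positivity
    have hn1 : (n : ℝ) + 1 ≠ 0 := by positivity
    have e : r - ((n : ℝ) + 1) - 1 = r - ((n : ℝ) + 1 + 1) := by ring
    simp only [Pi.pow_apply, Nat.cast_add, Nat.cast_one, Nat.cast_mul, id, Nat.add_sub_cancel, e]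
    field_simp
    ring

lemma powTaylor_self (r : ℝ) (n : ℕ) (b : ℝ) : powTaylor r n b b = b ^ r := by
  rw [powTaylor, Finset.sum_range_succ']
  simp

/-- Taylor remainder estimate for `t ↦ t ^ r` on `[φ, ∞)`, on either side of the centre; the
hypothesis on `r` makes the derivative of order `n + 1` largest at `φ`. -/
lemma abs_rpow_sub_powTaylor_le (r : ℝ) (n : ℕ) (hr : r ≤ n + 1) {φ a b : ℝ} (hφ : 0 < φ)
    (ha : φ ≤ a) (hb : φ ≤ b) :
    |b ^ r - powTaylor r n b a| ≤
      (∏ l ∈ Finset.range (n + 1), |r - (l : ℝ)|) * φ ^ (r - ((n : ℝ) + 1)) / n.factorial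
        * |b - a| ^ (n + 1) := by
  have hmem : ∀ t ∈ Set.uIcc a b, φ ≤ t := fun t ht => (le_inf ha hb).trans ht.1
  have key := (convex_uIcc a b).norm_image_sub_le_of_norm_hasDerivWithin_le
    (C := (∏ l ∈ Finset.range (n + 1), |r - (l : ℝ)|) / n.factorial
      * φ ^ (r - ((n : ℝ) + 1)) * |b - a| ^ n)
    (fun t ht => (hasDerivAt_powTaylor r n b t (hφ.trans_le (hmem t ht))).hasDerivWithinAt)
    (fun t ht => ?_) Set.left_mem_uIcc Set.right_mem_uIcc
  · rw [powTaylor_self, Real.norm_eq_abs, Real.norm_eq_abs] at key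
    refine key.trans_eq ?_
    ring
  · have ht0 := hmem t ht
    rw [Real.norm_eq_abs, abs_mul, abs_mul, abs_div, Finset.abs_prod, abs_pow, Nat.abs_cast,
      abs_of_nonneg (Real.rpow_nonneg (hφ.le.trans ht0) _)]
    have h1 : t ^ (r - ((n : ℝ) + 1)) ≤ φ ^ (r - ((n : ℝ) + 1)) :=
      Real.rpow_le_rpow_of_nonpos hφ ht0 (by linarith)
    have h2 : |b - t| ≤ |b - a| := Set.abs_sub_right_of_mem_uIcc ht
    gcongr

lemma mu_eq (x s : ℝ) : mu x s = |x + s| - |x| := by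
  unfold mu
  split_ifs with h1 h2 h2
  · rw [abs_of_pos h1, abs_of_pos h2]; ring
  · rw [abs_of_pos h1, abs_of_nonpos (not_lt.1 h2)]; ring
  · rw [abs_of_nonpos (not_lt.1 h1), abs_of_pos h2]; ring
  · rw [abs_of_nonpos (not_lt.1 h1), abs_of_nonpos (not_lt.1 h2)]; ring

lemma piq_succ (q : ℝ) (k : ℕ) :
    piq q (k + 1) = ∏ l ∈ Finset.range k, (q - 1 - (l : ℝ)) := by
  rw [piq, Nat.add_sub_cancel]
  induction k with
  | zero => simp
  | succ k ih =>
    rw [Finset.prod_Icc_succ_top (by omega), ih, Finset.prod_range_succ]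
    push_cast
    ring

lemma sum_Icc_one_eq (f : ℕ → ℝ) (p : ℕ) :
    ∑ j ∈ Finset.Icc 1 p, f j = ∑ k ∈ Finset.range p, f (k + 1) := by
  induction p with
  | zero => simp
  | succ p ih => rw [Finset.sum_Icc_succ_top (by omega), ih, Finset.sum_range_succ]

lemma mmodel_eq (q : ℝ) (p : ℕ) (x s : ℝ) :
    mmodel q p x s = powTaylor q p |x + s| |x| := by
  rw [mmodel, powTaylor, Finset.sum_range_succ', sum_Icc_one_eq, mu_eq x s,
    Finset.mul_sum, add_comm]
  congr 1
  · refine Finset.sum_congr rfl fun k _ => ?_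
    have e : ∏ l ∈ Finset.range (k + 1), (q - (l : ℝ)) = q * piq q (k + 1) := by
      rw [Finset.prod_range_succ', piq_succ, mul_comm]
      congr 1
      · simp
      · exact Finset.prod_congr rfl fun l _ => by push_cast; ring
    rw [e]
    ring
  · simp

lemma Dmodel_eq (q : ℝ) (n : ℕ) (x s : ℝ) :
    Dmodel q (n + 1) x s =
      Real.sign (x + s) * (q * powTaylor (q - 1) n |x + s| |x|) := by
  rw [Dmodel, powTaylor, sum_Icc_one_eq, mu_eq x s]
  congr 2
  refine Finset.sum_congr rfl fun k _ => ?_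
  have e : q - ((k + 1 : ℕ) : ℝ) = q - 1 - (k : ℝ) := by push_cast; ring
  rw [piq_succ, Nat.add_sub_cancel, e]

theorem stmt_5 (q : ℝ) (hq : q ∈ Set.Ioo (0:ℝ) 1) (p : ℕ) (hp : 1 ≤ p)
    (φ : ℝ) (hφ : 0 < φ) (x s : ℝ) (hx : φ ≤ |x|) (hxs : φ ≤ |x + s|) :
    |(|x + s| ^ q) - mmodel q p x s| ≤
      ((∏ ℓ ∈ Finset.range (p + 1), |q - (ℓ : ℝ)|) * φ ^ (q - ((p : ℝ) + 1))) /
        Nat.factorial p * |s| ^ (p + 1) ∧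
    |q * |x + s| ^ (q - 1) * Real.sign (x + s) - Dmodel q p x s| ≤
      ((∏ ℓ ∈ Finset.range (p + 1), |q - (ℓ : ℝ)|) * φ ^ (q - ((p : ℝ) + 1))) * |s| ^ p := by
  obtain ⟨hq0, hq1⟩ := hq
  have hxs0 : x + s ≠ 0 := abs_pos.1 (hφ.trans_le hxs)
  have hs : |(|x + s| - |x|)| ≤ |s| := by
    simpa using abs_abs_sub_abs_le_abs_sub (x + s) x
  have hφr : ∀ r : ℝ, 0 ≤ φ ^ r := fun r => Real.rpow_nonneg hφ.le r
  have hpr : ∀ (r : ℝ) (n : ℕ), 0 ≤ ∏ l ∈ Finset.range n, |r - (l : ℝ)| :=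
    fun r n => Finset.prod_nonneg fun _ _ => abs_nonneg _
  constructor
  · rw [mmodel_eq q p x s]
    have hp0 : (0 : ℝ) ≤ p := Nat.cast_nonneg p
    refine (abs_rpow_sub_powTaylor_le q p (by linarith) hφ hx hxs).trans ?_
    have := mul_nonneg (hpr q (p + 1)) (hφr (q - ((p : ℝ) + 1)))
    gcongr
  · obtain ⟨n, rfl⟩ : ∃ n, p = n + 1 := ⟨p - 1, by omega⟩
    rw [Dmodel_eq q n x s]
    have hn0 : (0 : ℝ) ≤ n := Nat.cast_nonneg n
    have key := abs_rpow_sub_powTaylor_le (q - 1) n (by linarith) hφ hx hxs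
    have hsign : |Real.sign (x + s)| = 1 := by
      rcases Real.sign_apply_eq_of_ne_zero (x + s) hxs0 with h | h <;> simp [h]
    have e1 : q * |x + s| ^ (q - 1) * Real.sign (x + s)
        - Real.sign (x + s) * (q * powTaylor (q - 1) n |x + s| |x|)
        = Real.sign (x + s) * (q * (|x + s| ^ (q - 1) - powTaylor (q - 1) n |x + s| |x|)) := by
      ring
    rw [e1, abs_mul, hsign, one_mul, abs_mul]
    have e2 : ∏ l ∈ Finset.range (n + 1 + 1), |q - (l : ℝ)|
        = |q| * ∏ l ∈ Finset.range (n + 1), |q - 1 - (l : ℝ)| := by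
      rw [Finset.prod_range_succ', mul_comm]
      congr 1
      · simp
      · exact Finset.prod_congr rfl fun l _ => by push_cast; congr 1; ring
    have e3 : q - (((n + 1 : ℕ) : ℝ) + 1) = q - 1 - ((n : ℝ) + 1) := by push_cast; ring
    rw [e2, e3, mul_assoc, mul_assoc]
    refine mul_le_mul_of_nonneg_left (key.trans ?_) (abs_nonneg q)
    have hA := mul_nonneg (hpr (q - 1) (n + 1)) (hφr (q - 1 - ((n : ℝ) + 1)))
    have hf : (1 : ℝ) ≤ n.factorial := by exact_mod_cast n.factorial_pos
    rw [← mul_assoc]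
    exact mul_le_mul (div_le_self hA hf) (pow_le_pow_left₀ (abs_nonneg _) hs _)
      (by positivity) hA
end

section
/- Let q ∈ (0,1) and let p be an odd positive integer. Then for all x, s ∈ ℝ with x ≠ 0 and x + s ≠ 0, the two-sided Taylor model overestimates the function: |x+s|^q ≤ m_p(x,s) = |x|^q + q Σ_{j=1}^p (π_j(q)/j!) |x|^{q−j} μ(x,s)^j. -/
/-- The Taylor polynomial of `t ↦ t ^ q` of order `p`, evaluated at `b`, as a function of its
centre `a`. -/
noncomputable def taylorCentre (q : ℝ) (p : ℕ) (b a : ℝ) : ℝ :=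
  a ^ q + q * ∑ j ∈ Finset.Icc 1 p,
    (piq q j / Nat.factorial j) * a ^ (q - (j : ℝ)) * (b - a) ^ j

lemma mu_eq_abs_sub_abs {x s : ℝ} : mu x s = |x + s| - |x| := by
  unfold mu
  split_ifs with h1 h2 h2
  · rw [abs_of_pos h1, abs_of_pos h2]; ring
  · rw [abs_of_pos h1, abs_of_nonpos (not_lt.mp h2)]; ring
  · rw [abs_of_nonpos (not_lt.mp h1), abs_of_pos h2]; ring
  · rw [abs_of_nonpos (not_lt.mp h1), abs_of_nonpos (not_lt.mp h2)]; ring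

lemma piq_succ_succ (q : ℝ) (n : ℕ) : piq q (n + 2) = piq q (n + 1) * (q - ((n + 1 : ℕ) : ℝ)) := by
  simp only [piq, Nat.add_sub_cancel, show n + 2 - 1 = n + 1 by omega]
  rw [Finset.prod_Icc_succ_top (by omega)]

/-- `piq q (n + 1)` has `n` factors, all negative when `q < 1`. -/
lemma neg_one_pow_mul_piq_nonneg {q : ℝ} (hq : q < 1) (n : ℕ) :
    0 ≤ (-1) ^ n * piq q (n + 1) := by
  induction n with
  | zero => simp [piq]
  | succ n ih =>
    rw [piq_succ_succ]
    have h : 0 ≤ ((n + 1 : ℕ) : ℝ) - q := by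
      push_cast
      have : (0 : ℝ) ≤ n := n.cast_nonneg
      linarith
    calc (0 : ℝ) ≤ ((-1) ^ n * piq q (n + 1)) * (((n + 1 : ℕ) : ℝ) - q) := mul_nonneg ih h
      _ = _ := by ring

lemma taylorCentre_self (q : ℝ) (p : ℕ) (b : ℝ) : taylorCentre q p b b = b ^ q := by
  unfold taylorCentre
  rw [Finset.sum_eq_zero, mul_zero, add_zero]
  intro j hj
  rw [sub_self, zero_pow (by have := (Finset.mem_Icc.mp hj).1; omega), mul_zero]

/-- Differentiating the Taylor polynomial in its centre telescopes to a single term. -/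
lemma hasDerivAt_taylorCentre (q : ℝ) (p : ℕ) (b : ℝ) {a : ℝ} (ha : 0 < a) :
    HasDerivAt (taylorCentre q p b)
      (q * (piq q (p + 1) / Nat.factorial p) * a ^ (q - ((p + 1 : ℕ) : ℝ)) * (b - a) ^ p) a := by
  induction p with
  | zero =>
    have h := Real.hasDerivAt_rpow_const (x := a) (p := q) (Or.inl ha.ne')
    have e : taylorCentre q 0 b = fun a => a ^ q := by
      funext a; simp [taylorCentre]
    rw [e]
    refine h.congr_deriv ?_
    simp [piq]
  | succ n ih =>
    have e : taylorCentre q (n + 1) b = fun a => taylorCentre q n b a +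
        q * (piq q (n + 1) / Nat.factorial (n + 1)) *
          (a ^ (q - ((n + 1 : ℕ) : ℝ)) * (b - a) ^ (n + 1)) := by
      funext a
      simp only [taylorCentre]
      rw [Finset.sum_Icc_succ_top (by omega)]
      ring
    have h1 := Real.hasDerivAt_rpow_const (x := a) (p := q - ((n + 1 : ℕ) : ℝ)) (Or.inl ha.ne')
    have h2 := (((hasDerivAt_id a).const_sub b).pow (n + 1))
    have h := ih.add ((h1.mul h2).const_mul (q * (piq q (n + 1) / Nat.factorial (n + 1))))
    rw [e]
    refine h.congr_deriv ?_
    have e2 : q - ((n + 1 : ℕ) : ℝ) - 1 = q - ((n + 1 + 1 : ℕ) : ℝ) := by push_cast; ring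
    rw [e2, piq_succ_succ, Nat.factorial_succ]
    have hf : (Nat.factorial n : ℝ) ≠ 0 := by positivity
    have hn : ((n : ℝ) + 1) ≠ 0 := by positivity
    simp only [Nat.add_sub_cancel, id, Pi.pow_apply]
    push_cast
    field_simp
    ring

lemma rpow_le_taylorCentre {q : ℝ} (hq : q ∈ Set.Ioo (0 : ℝ) 1) {p : ℕ} (hp : Odd p) {a b : ℝ}
    (ha : 0 < a) (hb : 0 < b) : b ^ q ≤ taylorCentre q p b a := by
  rw [← taylorCentre_self q p b]
  have hpi : piq q (p + 1) ≤ 0 := by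
    have := neg_one_pow_mul_piq_nonneg hq.2 p
    rw [hp.neg_one_pow] at this
    linarith
  have hcoef : ∀ t : ℝ, 0 < t →
      q * (piq q (p + 1) / Nat.factorial p) * t ^ (q - ((p + 1 : ℕ) : ℝ)) ≤ 0 := fun t ht =>
    mul_nonpos_of_nonpos_of_nonneg
      (mul_nonpos_of_nonneg_of_nonpos hq.1.le
        (div_nonpos_of_nonpos_of_nonneg hpi (Nat.cast_nonneg _)))
      (Real.rpow_nonneg ht.le _)
  rcases le_total a b with hab | hab
  · have hpos : ∀ t ∈ Set.Icc a b, 0 < t := fun t ht => ha.trans_le ht.1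
    refine antitoneOn_of_deriv_nonpos (convex_Icc a b)
      (fun t ht => (hasDerivAt_taylorCentre q p b (hpos t ht)).continuousAt.continuousWithinAt)
      (fun t ht => (hasDerivAt_taylorCentre q p b
        (hpos t (interior_subset ht))).differentiableAt.differentiableWithinAt)
      (fun t ht => ?_) (Set.left_mem_Icc.mpr hab) (Set.right_mem_Icc.mpr hab) hab
    have ht := interior_subset ht
    rw [(hasDerivAt_taylorCentre q p b (hpos t ht)).deriv]
    exact mul_nonpos_of_nonpos_of_nonneg (hcoef t (hpos t ht)) (pow_nonneg (sub_nonneg.mpr ht.2) p)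
  · have hpos : ∀ t ∈ Set.Icc b a, 0 < t := fun t ht => hb.trans_le ht.1
    refine monotoneOn_of_deriv_nonneg (convex_Icc b a)
      (fun t ht => (hasDerivAt_taylorCentre q p b (hpos t ht)).continuousAt.continuousWithinAt)
      (fun t ht => (hasDerivAt_taylorCentre q p b
        (hpos t (interior_subset ht))).differentiableAt.differentiableWithinAt)
      (fun t ht => ?_) (Set.left_mem_Icc.mpr hab) (Set.right_mem_Icc.mpr hab) hab
    have ht := interior_subset ht
    rw [(hasDerivAt_taylorCentre q p b (hpos t ht)).deriv]
    exact mul_nonneg_of_nonpos_of_nonpos (hcoef t (hpos t ht))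
      (hp.pow_nonpos (sub_nonpos.mpr ht.1))

theorem stmt_6 (q : ℝ) (hq : q ∈ Set.Ioo (0:ℝ) 1) (p : ℕ) (hp : Odd p) (hp0 : 0 < p)
    (x s : ℝ) (hx : x ≠ 0) (hxs : x + s ≠ 0) :
    |x + s| ^ q ≤ mmodel q p x s := by
  have h := rpow_le_taylorCentre hq hp (abs_pos.mpr hx) (abs_pos.mpr hxs)
  simpa only [mmodel, mu_eq_abs_sub_abs, taylorCentre] using h
end

section
/- Let p be an odd positive integer and q ∈ (0,1). Then for every real β > −1, Σ_{j=1}^p (π_j(q)/(j−1)!) β^{j−1} > q/2. (In particular this sum is strictly positive for all β > −1.) -/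
/-- The number `c_i = (1 - q)(2 - q) ⋯ (i - q) / i!`, which is `(-1)^i` times the generalized
binomial coefficient `(q - 1 choose i)`. -/
noncomputable def coeffAbs (q : ℝ) (i : ℕ) : ℝ :=
  (-1) ^ i * (piq q (i + 1) / Nat.factorial i)

/-- The truncated binomial series `∑_{i ≤ n} c_i (-β)^i`. -/
noncomputable def partialSum (q : ℝ) (n : ℕ) (β : ℝ) : ℝ :=
  ∑ i ∈ Finset.range (n + 1), coeffAbs q i * (-β) ^ i

lemma coeffAbs_zero (q : ℝ) : coeffAbs q 0 = 1 := by
  simp [coeffAbs, piq]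

lemma coeffAbs_succ (q : ℝ) (i : ℕ) :
    ((i : ℝ) + 1) * coeffAbs q (i + 1) = (i + 1 - q) * coeffAbs q i := by
  have h : piq q (i + 1 + 1) = piq q (i + 1) * (q - (i + 1)) := by
    simp [piq, Finset.prod_Icc_succ_top]
  have h1 : ((i : ℝ) + 1) ≠ 0 := by positivity
  have h2 : (Nat.factorial i : ℝ) ≠ 0 := by positivity
  unfold coeffAbs
  rw [h, Nat.factorial_succ]
  push_cast
  field_simp
  ring

lemma coeffAbs_pos {q : ℝ} (hq : q < 1) (i : ℕ) : 0 < coeffAbs q i := by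
  induction i with
  | zero => simp [coeffAbs_zero]
  | succ i ih =>
    have hi : (0 : ℝ) ≤ i := i.cast_nonneg
    have h : 0 < ((i : ℝ) + 1) * coeffAbs q (i + 1) := by
      rw [coeffAbs_succ]
      exact mul_pos (by linarith) ih
    exact pos_of_mul_pos_right h (by positivity)

lemma coeffAbs_succ_le {q : ℝ} (hq0 : 0 < q) (hq : q < 1) (i : ℕ) :
    coeffAbs q (i + 1) ≤ coeffAbs q i := by
  have hi : (0 : ℝ) < (i : ℝ) + 1 := by positivity
  have h := coeffAbs_succ q i
  have h' := mul_pos hq0 (coeffAbs_pos hq i)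
  exact le_of_mul_le_mul_left (by linarith) hi

/-- The right-hand side is nondecreasing in `n`, with value `1 - q` at `n = 0`. -/
lemma le_mul_coeffAbs {q : ℝ} (hq : q < 1) (n : ℕ) :
    1 - q ≤ (n + 1 - q) * coeffAbs q n := by
  induction n with
  | zero => simp [coeffAbs_zero]
  | succ n ih =>
    have h := coeffAbs_succ q n
    have h' := mul_pos (sub_pos.2 hq) (coeffAbs_pos hq (n + 1))
    push_cast
    linarith

lemma partialSum_succ (q : ℝ) (n : ℕ) (β : ℝ) :
    partialSum q (n + 1) β = partialSum q n β + coeffAbs q (n + 1) * (-β) ^ (n + 1) :=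
  Finset.sum_range_succ _ _

lemma partialSum_zero (q β : ℝ) : partialSum q 0 β = 1 := by
  simp [partialSum, coeffAbs_zero]

lemma one_le_partialSum {q : ℝ} (hq : q < 1) (n : ℕ) {β : ℝ} (hβ : β ≤ 0) :
    1 ≤ partialSum q n β := by
  induction n with
  | zero => simp [partialSum_zero]
  | succ n ih =>
    rw [partialSum_succ]
    have := mul_nonneg (coeffAbs_pos hq (n + 1)).le (pow_nonneg (neg_nonneg.2 hβ) (n + 1))
    linarith

/-- Truncations of odd degree are nondecreasing in the degree, and the first one is
`1 - (1 - q) β ≥ q`. -/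
lemma le_partialSum_odd {q : ℝ} (hq0 : 0 < q) (hq : q < 1) {β : ℝ} (h0 : 0 ≤ β) (h1 : β ≤ 1)
    (m : ℕ) : q ≤ partialSum q (2 * m + 1) β := by
  induction m with
  | zero =>
    have h := coeffAbs_succ q 0
    rw [coeffAbs_zero] at h
    norm_num at h
    rw [partialSum_succ]
    norm_num [partialSum_zero, h]
    nlinarith
  | succ m ih =>
    rw [show 2 * (m + 1) + 1 = 2 * m + 1 + 1 + 1 by ring, partialSum_succ, partialSum_succ]
    have he : Even (2 * m + 1 + 1) := ⟨m + 1, by ring⟩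
    rw [he.neg_pow, he.add_one.neg_pow]
    have hc : coeffAbs q (2 * m + 1 + 1 + 1) * β ^ (2 * m + 1 + 1 + 1)
        ≤ coeffAbs q (2 * m + 1 + 1) * β ^ (2 * m + 1 + 1) :=
      mul_le_mul (coeffAbs_succ_le hq0 hq _) (pow_le_pow_of_le_one h0 h1 (Nat.le_succ _))
        (by positivity) (coeffAbs_pos hq _).le
    linarith

lemma le_partialSum_of_le_one {q : ℝ} (hq0 : 0 < q) (hq : q < 1) {β : ℝ} (h0 : 0 ≤ β)
    (h1 : β ≤ 1) (m : ℕ) : q ≤ partialSum q (2 * m) β := by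
  have h := le_partialSum_odd hq0 hq h0 h1 m
  have ho : Odd (2 * m + 1) := ⟨m, rfl⟩
  rw [partialSum_succ, ho.neg_pow] at h
  have := mul_nonneg (coeffAbs_pos hq (2 * m + 1)).le (pow_nonneg h0 (2 * m + 1))
  linarith

/-- The truncated form of the differential equation `(1 + β) f' = (q - 1) f` of
`(1 + β) ^ (q - 1)`: truncation leaves only a remainder of top degree. -/
lemma hasDerivAt_partialSum (q : ℝ) (n : ℕ) {β : ℝ} (hβ : 1 + β ≠ 0) :
    HasDerivAt (partialSum q n)
      (((q - 1) * partialSum q n β + (n + 1 - q) * coeffAbs q n * (-β) ^ n) / (1 + β)) β := by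
  induction n with
  | zero =>
    have h : partialSum q 0 = fun _ => 1 := funext (partialSum_zero q)
    rw [h]
    refine (hasDerivAt_const β (1 : ℝ)).congr_deriv ?_
    simp [coeffAbs_zero]
  | succ n ih =>
    have h : partialSum q (n + 1) =
        fun β => partialSum q n β + coeffAbs q (n + 1) * (-β) ^ (n + 1) :=
      funext (partialSum_succ q n)
    have hd := ih.add ((((hasDerivAt_id β).neg).pow (n + 1)).const_mul (coeffAbs q (n + 1)))
    rw [h]
    refine hd.congr_deriv ?_
    have hc := coeffAbs_succ q n
    simp only [Pi.neg_apply, id, Nat.add_sub_cancel]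
    push_cast
    rw [eq_div_iff hβ, add_mul, div_mul_cancel₀ _ hβ]
    linear_combination (-(-β) ^ n) * hc

lemma le_partialSum_of_one_le {q : ℝ} (hq0 : 0 < q) (hq : q < 1) {β : ℝ} (h1 : 1 ≤ β) (m : ℕ) :
    q ≤ partialSum q (2 * m) β := by
  have hd : ∀ x : ℝ, 1 ≤ x → HasDerivAt (fun y => -partialSum q (2 * m) y) _ x :=
    fun x hx => (hasDerivAt_partialSum q (2 * m) (β := x) (by linarith)).neg
  have key := image_le_of_deriv_right_lt_deriv_boundary (a := 1) (b := β)
    (f := fun y => -partialSum q (2 * m) y) (B := fun _ => -q) (B' := fun _ => 0)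
    (fun x hx => (hd x hx.1).continuousAt.continuousWithinAt)
    (fun x hx => (hd x hx.1).hasDerivWithinAt)
    (neg_le_neg (le_partialSum_of_le_one hq0 hq zero_le_one le_rfl m))
    (fun x => hasDerivAt_const x (-q)) ?_ (Set.right_mem_Icc.2 h1)
  · exact neg_le_neg_iff.1 key
  · intro x hx hxq
    have hxS : partialSum q (2 * m) x = q := neg_injective hxq
    have he : Even (2 * m) := even_two_mul m
    rw [hxS, he.neg_pow, neg_lt_zero]
    have hx1 : 1 ≤ x := hx.1
    have hc := le_mul_coeffAbs hq (2 * m)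
    have hp : 1 ≤ x ^ (2 * m) := one_le_pow₀ hx1
    have hcp := le_mul_of_one_le_right ((sub_pos.2 hq).le.trans hc) hp
    apply div_pos _ (by linarith)
    -- The numerator is at least `(q - 1) q + (1 - q) = (1 - q)²`.
    nlinarith [mul_pos (sub_pos.2 hq) (sub_pos.2 hq)]

theorem stmt_8 (p : ℕ) (hp : Odd p) (hp0 : 0 < p) (q : ℝ) (hq : q ∈ Set.Ioo (0:ℝ) 1)
    (β : ℝ) (hβ : -1 < β) :
    q / 2 < ∑ j ∈ Finset.Icc 1 p, piq q j / Nat.factorial (j - 1) * β ^ (j - 1) := by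
  obtain ⟨hq0, hq1⟩ := hq
  obtain ⟨m, rfl⟩ := hp
  have hS : ∑ j ∈ Finset.Icc 1 (2 * m + 1), piq q j / Nat.factorial (j - 1) * β ^ (j - 1)
      = partialSum q (2 * m) β := by
    rw [← Finset.Ico_add_one_right_eq_Icc, Finset.sum_Ico_eq_sum_range]
    refine Finset.sum_congr rfl fun i _ => ?_
    have hs : ((-1 : ℝ) ^ i) * (-1) ^ i = 1 := by rw [← mul_pow]; simp
    rw [coeffAbs, neg_pow β, Nat.add_sub_cancel_left, add_comm 1 i]
    linear_combination (-(piq q (i + 1) / Nat.factorial i * β ^ i)) * hs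
  rw [hS]
  have h : q ≤ partialSum q (2 * m) β := by
    rcases le_total β 0 with h0 | h0
    · exact hq1.le.trans (one_le_partialSum hq1 _ h0)
    · rcases le_total β 1 with h1 | h1
      · exact le_partialSum_of_le_one hq0 hq1 h0 h1 m
      · exact le_partialSum_of_one_le hq0 hq1 h1 m
  linarith
end

section
/- Let K be a natural number, N a nonempty finite index set, and let constants satisfy 0 < γ0 < 1 < γ1 and 0 < σ_min ≤ σ_max. Let S ⊆ {0,…,K}, and for each i ∈ N let J_i ⊆ {0,…,K} and D_i ⊆ S be sets with J_i ∩ D_i = ∅, and let σ_i : {0,…,K+1} → ℝ be a sequence such that σ_i(0) ≥ σ_min, σ_i(K+1) ≤ σ_max, σ_i(k+1) ≥ γ1 σ_i(k) for k ∈ J_i, σ_i(k+1) ≥ γ0 σ_i(k) for k ∈ D_i, and σ_i(k+1) = σ_i(k) for all other k ∈ {0,…,K}. Assume moreover that every k ∈ {0,…,K} \ S belongs to J_i for at least one i ∈ N. Then K ≤ (1 + |N| · |log γ0| / log γ1) · |S| + (|N| / log γ1) · log(σ_max/σ_min). -/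
/-!
Each sequence `σ i` stays positive, so its logarithm makes sense: over the `K + 1` steps it rises
by at least `log γ1` on `J i`, drops by at most `|log γ0|` on `D i`, and is constant elsewhere.
Telescoping between `σmin` and `σmax` gives
`|J i| log γ1 ≤ |D i| |log γ0| + log (σmax / σmin)`, and `|D i| ≤ |S|` (`card_mul_log_le`).
Since `S` and the sets `J i` cover `{0, …, K}`, we have `K + 1 ≤ |S| + ∑ i, |J i|`; bounding each
`|J i|` finishes the proof.
-/

/-- The bound on the number of increases of one sequence. -/
lemma card_mul_log_le (K : ℕ) (γ0 γ1 σmin σmax : ℝ)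
    (hγ0 : 0 < γ0) (hγ01 : γ0 < 1) (hγ1 : 1 < γ1) (hσmin : 0 < σmin) (hσ : σmin ≤ σmax)
    (S J D : Finset ℕ) (hS : S ⊆ Finset.range (K + 1)) (hJ : J ⊆ Finset.range (K + 1))
    (hD : D ⊆ S) (hJD : Disjoint J D) (σ : ℕ → ℝ)
    (hσ0 : σmin ≤ σ 0) (hσK : σ (K + 1) ≤ σmax)
    (hup : ∀ k ∈ J, γ1 * σ k ≤ σ (k + 1))
    (hdown : ∀ k ∈ D, γ0 * σ k ≤ σ (k + 1))
    (hkeep : ∀ k ∈ Finset.range (K + 1), k ∉ J → k ∉ D → σ (k + 1) = σ k) :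
    (J.card : ℝ) * Real.log γ1 ≤ S.card * |Real.log γ0| + Real.log (σmax / σmin) := by
  have hpos : ∀ n, n ≤ K + 1 → 0 < σ n := by
    intro n
    induction n with
    | zero => intro _; linarith
    | succ k ih =>
      intro hk
      have h := ih (by omega)
      by_cases h1 : k ∈ J
      · exact lt_of_lt_of_le (by positivity) (hup k h1)
      by_cases h2 : k ∈ D
      · exact lt_of_lt_of_le (by positivity) (hdown k h2)
      rw [hkeep k (Finset.mem_range.2 (by omega)) h1 h2]
      exact h
  have hstep : ∀ k ∈ Finset.range (K + 1),
      (if k ∈ J then Real.log γ1 else 0) + (if k ∈ D then Real.log γ0 else 0)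
        ≤ Real.log (σ (k + 1)) - Real.log (σ k) := by
    intro k hk
    have hk' := Finset.mem_range.1 hk
    have h := hpos k (by omega)
    by_cases h1 : k ∈ J
    · have h2 : k ∉ D := Finset.disjoint_left.1 hJD h1
      have h3 := Real.log_le_log (by positivity) (hup k h1)
      rw [Real.log_mul (by positivity) h.ne'] at h3
      simp only [h1, h2, if_true, if_false]
      linarith
    by_cases h2 : k ∈ D
    · have h3 := Real.log_le_log (by positivity) (hdown k h2)
      rw [Real.log_mul (by positivity) h.ne'] at h3
      simp only [h1, h2, if_true, if_false]
      linarith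
    simp [h1, h2, hkeep k hk h1 h2]
  have hsum := Finset.sum_le_sum hstep
  rw [Finset.sum_range_sub (fun k => Real.log (σ k)), Finset.sum_add_distrib,
    Finset.sum_ite_mem, Finset.sum_ite_mem, Finset.inter_eq_right.2 hJ,
    Finset.inter_eq_right.2 (hD.trans hS), Finset.sum_const, Finset.sum_const,
    nsmul_eq_mul, nsmul_eq_mul] at hsum
  have hlo := Real.log_le_log hσmin hσ0
  have hhi := Real.log_le_log (hpos (K + 1) le_rfl) hσK
  have hcard : (D.card : ℝ) * |Real.log γ0| ≤ S.card * |Real.log γ0| := by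
    gcongr
  rw [abs_of_neg (Real.log_neg hγ0 hγ01)] at hcard ⊢
  rw [Real.log_div (by linarith) hσmin.ne']
  linarith

theorem stmt_12 (K : ℕ) {ι : Type*} [Fintype ι] [Nonempty ι]
    (γ0 γ1 σmin σmax : ℝ)
    (hγ0 : 0 < γ0) (hγ01 : γ0 < 1) (hγ1 : 1 < γ1)
    (hσmin : 0 < σmin) (hσ : σmin ≤ σmax)
    (S : Finset ℕ) (hS : S ⊆ Finset.range (K + 1))
    (J D : ι → Finset ℕ)
    (hJ : ∀ i, J i ⊆ Finset.range (K + 1))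
    (hD : ∀ i, D i ⊆ S)
    (hJD : ∀ i, Disjoint (J i) (D i))
    (σ : ι → ℕ → ℝ)
    (hσ0 : ∀ i, σmin ≤ σ i 0)
    (hσK : ∀ i, σ i (K + 1) ≤ σmax)
    (hup : ∀ i, ∀ k ∈ J i, γ1 * σ i k ≤ σ i (k + 1))
    (hdown : ∀ i, ∀ k ∈ D i, γ0 * σ i k ≤ σ i (k + 1))
    (hkeep : ∀ i, ∀ k ∈ Finset.range (K + 1), k ∉ J i → k ∉ D i → σ i (k + 1) = σ i k)
    (hU : ∀ k ∈ Finset.range (K + 1), k ∉ S → ∃ i, k ∈ J i) :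
    (K : ℝ) ≤ (1 + (Fintype.card ι : ℝ) * |Real.log γ0| / Real.log γ1) * S.card +
      ((Fintype.card ι : ℝ) / Real.log γ1) * Real.log (σmax / σmin) := by
  have hL : 0 < Real.log γ1 := Real.log_pos hγ1
  have hcover : K + 1 ≤ S.card + ∑ i, (J i).card := by
    have hsub : Finset.range (K + 1) ⊆ S ∪ Finset.univ.biUnion J := by
      intro k hk
      by_cases h : k ∈ S
      · exact Finset.mem_union_left _ h
      · obtain ⟨i, hi⟩ := hU k hk h
        exact Finset.mem_union_right _ (Finset.mem_biUnion.2 ⟨i, Finset.mem_univ i, hi⟩)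
    calc K + 1 = (Finset.range (K + 1)).card := (Finset.card_range _).symm
      _ ≤ (S ∪ Finset.univ.biUnion J).card := Finset.card_le_card hsub
      _ ≤ S.card + (Finset.univ.biUnion J).card := Finset.card_union_le _ _
      _ ≤ S.card + ∑ i, (J i).card := by gcongr; exact Finset.card_biUnion_le
  have hcover' : (K : ℝ) + 1 ≤ S.card + ∑ i, ((J i).card : ℝ) := by exact_mod_cast hcover
  have hJcard : ∑ i, ((J i).card : ℝ) ≤ (Fintype.card ι : ℝ) *
      ((S.card * |Real.log γ0| + Real.log (σmax / σmin)) / Real.log γ1) := by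
    rw [← nsmul_eq_mul, ← Finset.card_univ]
    refine Finset.sum_le_card_nsmul _ _ _ fun i _ => ?_
    rw [le_div_iff₀ hL]
    exact card_mul_log_le K γ0 γ1 σmin σmax hγ0 hγ01 hγ1 hσmin hσ S (J i) (D i) hS (hJ i) (hD i)
      (hJD i) (σ i) (hσ0 i) (hσK i) (hup i) (hdown i) (hkeep i)
  calc (K : ℝ) ≤ S.card + (Fintype.card ι : ℝ) *
      ((S.card * |Real.log γ0| + Real.log (σmax / σmin)) / Real.log γ1) := by linarith
    _ = _ := by ring
end
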